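/- arXiv:1706.03631 — 2 statements merged into one kernel-verified Lean document; each statement's English description precedes it below -/
import Mathlib

section
/- Let n ≥ 2 and let m ≥ 2 be even. There exists a nonzero polynomial P in (n−1)m+1 complex variables such that for every Hankel tensor H of order m and dimension n whose parameter vector h satisfies P(h) ≠ 0, one has rank(H) = rank_S(H) = brank(H) = brank_S(H) = rank_V(H) = 1 + (n−1)m/2. -/
open scoped BigOperators
open MvPolynomial

noncomputable section

/-- An order-`m`, dimension-`n` complex tensor. -/
abbrev Tensor (m n : ℕ) := (Fin m → Fin n) → ℂ

/-- Tensors expressible as a sum of `r` rank-one tensors. -/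
def cpSet (m n r : ℕ) : Set (Tensor m n) :=
  {T | ∃ u : Fin r → Fin m → Fin n → ℂ, ∀ i, T i = ∑ k, ∏ j, u k j (i j)}

/-- Tensors expressible as a sum of `r` symmetric rank-one tensors. -/
def symSet (m n r : ℕ) : Set (Tensor m n) :=
  {T | ∃ v : Fin r → Fin n → ℂ, ∀ i, T i = ∑ k, ∏ j, v k (i j)}

/-- The Vandermonde vector `v(a,b) ∈ ℂ^n`, `v(a,b)_i = a^(n-1-i) * b^i`. -/
def vand (n : ℕ) (a b : ℂ) : Fin n → ℂ := fun i => a ^ (n - 1 - (i : ℕ)) * b ^ (i : ℕ)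

/-- Tensors expressible as a sum of `r` Vandermonde rank-one tensors. -/
def vandSet (m n r : ℕ) : Set (Tensor m n) :=
  {T | ∃ ab : Fin r → ℂ × ℂ, ∀ i, T i = ∑ k, ∏ j, vand n (ab k).1 (ab k).2 (i j)}

/-- The cp rank of a tensor. -/
def cpRank {m n : ℕ} (T : Tensor m n) : ℕ := sInf {r | T ∈ cpSet m n r}

/-- The symmetric rank of a tensor. -/
def symRank {m n : ℕ} (T : Tensor m n) : ℕ := sInf {r | T ∈ symSet m n r}

/-- The Vandermonde rank of a tensor. -/
def vandRank {m n : ℕ} (T : Tensor m n) : ℕ := sInf {r | T ∈ vandSet m n r}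

/-- The border rank of a tensor (closure in the product topology). -/
def brank {m n : ℕ} (T : Tensor m n) : ℕ := sInf {r | T ∈ closure (cpSet m n r)}

/-- The symmetric border rank of a tensor. -/
def bSymRank {m n : ℕ} (T : Tensor m n) : ℕ := sInf {r | T ∈ closure (symSet m n r)}

/-- The border Vandermonde rank of a tensor. -/
def bVandRank {m n : ℕ} (T : Tensor m n) : ℕ := sInf {r | T ∈ closure (vandSet m n r)}

/-- `T` is the Hankel tensor with parameter vector `h ∈ ℂ^{(n-1)m+1}`. -/
def IsHankel {m n : ℕ} (T : Tensor m n) (h : Fin ((n - 1) * m + 1) → ℂ) : Prop :=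
  ∀ i : Fin m → Fin n, T i = h ⟨∑ j, (i j : ℕ), by
    have h1 : ∑ j, (i j : ℕ) ≤ ∑ _j : Fin m, (n - 1) :=
      Finset.sum_le_sum fun j _ => Nat.le_pred_of_lt (i j).isLt
    simp only [Finset.sum_const, Finset.card_univ, Fintype.card_fin, smul_eq_mul] at h1
    exact Nat.lt_succ_of_le (h1.trans (le_of_eq (Nat.mul_comm m (n - 1))))⟩

/-- The `(d-r+1) × (r+1)` Hankel (catalecticant) matrix `C_{d-r,r}(h)` of `h ∈ ℂ^{d+1}`. -/
def hMat (d r : ℕ) (h : Fin (d + 1) → ℂ) : Matrix (Fin (d - r + 1)) (Fin (r + 1)) ℂ :=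
  Matrix.of fun i j => if hij : (i : ℕ) + (j : ℕ) < d + 1 then h ⟨(i : ℕ) + (j : ℕ), hij⟩ else 0

/-- The binary form `f(x,y) = f_0 x^r + f_1 x^(r-1) y + ⋯ + f_r y^r`. -/
def binForm (r : ℕ) (f : Fin (r + 1) → ℂ) : MvPolynomial (Fin 2) ℂ :=
  ∑ j : Fin (r + 1), C (f j) * X 0 ^ (r - (j : ℕ)) * X 1 ^ (j : ℕ)

/-- The binary form `h(x,y) = ∑_j binom(d,j) h_j x^j y^(d-j)` associated with `h ∈ ℂ^{d+1}`. -/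
def assocForm (d : ℕ) (h : Fin (d + 1) → ℂ) : MvPolynomial (Fin 2) ℂ :=
  ∑ j : Fin (d + 1), C ((d.choose (j : ℕ) : ℂ) * h j) * X 0 ^ (j : ℕ) * X 1 ^ (d - (j : ℕ))

/-- Parameter vectors of binary forms of Waring rank at most `r`. -/
def waringSet (d r : ℕ) : Set (Fin (d + 1) → ℂ) :=
  {h | ∃ ab : Fin r → ℂ × ℂ,
    assocForm d h = ∑ i, (C (ab i).1 * X 0 + C (ab i).2 * X 1) ^ d}

/-- The Waring rank of the binary form associated with `h`. -/
def waringRank (d : ℕ) (h : Fin (d + 1) → ℂ) : ℕ := sInf {r | h ∈ waringSet d r}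

/-- The border Waring rank of the binary form associated with `h`. -/
def bWaringRank (d : ℕ) (h : Fin (d + 1) → ℂ) : ℕ := sInf {r | h ∈ closure (waringSet d r)}

section HankelRecurrence

variable {A B : Type*} [CommRing A] [CommRing B]

/-- The square Hankel matrix `(h (i + j))` of size `s + 1`. -/
def hankelSq (s : ℕ) (h : ℕ → A) : Matrix (Fin (s + 1)) (Fin (s + 1)) A :=
  Matrix.of fun i j => h (i + j)

/-- The coefficients, scaled by `det (hankelSq s h)`, of the linear recurrence of order `s + 1`
satisfied by `h 0, …, h (2 * s + 1)`. -/
def recCoeff (s : ℕ) (h : ℕ → A) : Fin (s + 1) → A :=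
  Matrix.mulVec (hankelSq s h).adjugate fun i => h (i + (s + 1))

/-- The characteristic polynomial, scaled by `det (hankelSq s h)`, of the linear recurrence of order
`s + 1` satisfied by `h 0, …, h (2 * s + 1)`. -/
def recPoly (s : ℕ) (h : ℕ → A) : Polynomial A :=
  Polynomial.C (hankelSq s h).det * Polynomial.X ^ (s + 1) -
    ∑ j : Fin (s + 1), Polynomial.C (recCoeff s h j) * Polynomial.X ^ (j : ℕ)

/-- A polynomial expression in `h` whose nonvanishing makes `hankelSq s h` invertible and
`recPoly s h` separable. -/
def hankelGeneric (s : ℕ) (h : ℕ → A) : A :=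
  (hankelSq s h).det *
    Polynomial.resultant (recPoly s h) (Polynomial.derivative (recPoly s h)) (s + 1) s

lemma hankelSq_map (φ : A →+* B) (s : ℕ) (h : ℕ → A) :
    φ.mapMatrix (hankelSq s h) = hankelSq s (φ ∘ h) := by
  ext i j
  simp [hankelSq]

lemma det_hankelSq_map (φ : A →+* B) (s : ℕ) (h : ℕ → A) :
    φ (hankelSq s h).det = (hankelSq s (φ ∘ h)).det := by
  rw [RingHom.map_det, hankelSq_map]

lemma recCoeff_map (φ : A →+* B) (s : ℕ) (h : ℕ → A) (j : Fin (s + 1)) :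
    φ (recCoeff s h j) = recCoeff s (φ ∘ h) j := by
  rw [recCoeff, recCoeff, RingHom.map_mulVec, ← hankelSq_map, ← RingHom.map_adjugate]
  rfl

lemma recPoly_map (φ : A →+* B) (s : ℕ) (h : ℕ → A) :
    (recPoly s h).map φ = recPoly s (φ ∘ h) := by
  simp only [recPoly, Polynomial.map_sub, Polynomial.map_mul, Polynomial.map_sum,
    Polynomial.map_pow, Polynomial.map_C, Polynomial.map_X, det_hankelSq_map φ, recCoeff_map φ]

lemma hankelGeneric_map (φ : A →+* B) (s : ℕ) (h : ℕ → A) :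
    φ (hankelGeneric s h) = hankelGeneric s (φ ∘ h) := by
  rw [hankelGeneric, hankelGeneric, map_mul, det_hankelSq_map, ← Polynomial.resultant_map_map,
    ← Polynomial.derivative_map, recPoly_map]

lemma sum_mul_recCoeff (s : ℕ) (h : ℕ → A) {i : ℕ} (hi : i ≤ s) :
    ∑ j : Fin (s + 1), h (i + j) * recCoeff s h j = (hankelSq s h).det * h (i + (s + 1)) := by
  have key : Matrix.mulVec (hankelSq s h) (recCoeff s h) =
      (hankelSq s h).det • fun i : Fin (s + 1) => h (i + (s + 1)) := by
    rw [recCoeff, Matrix.mulVec_mulVec, Matrix.mul_adjugate, Matrix.smul_mulVec, Matrix.one_mulVec]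
  exact congrFun key ⟨i, by omega⟩

lemma degree_sum_C_mul_X_pow_lt (s : ℕ) (g : Fin (s + 1) → A) :
    (∑ j : Fin (s + 1), Polynomial.C (g j) * Polynomial.X ^ (j : ℕ)).degree <
      ((s + 1 : ℕ) : WithBot ℕ) := by
  refine lt_of_le_of_lt (Polynomial.degree_sum_le _ _) ?_
  rw [Finset.sup_lt_iff (WithBot.bot_lt_coe _)]
  intro j _
  exact lt_of_le_of_lt (Polynomial.degree_C_mul_X_pow_le _ _) (by exact_mod_cast j.isLt)

lemma natDegree_recPoly_le (s : ℕ) (h : ℕ → A) : (recPoly s h).natDegree ≤ s + 1 := by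
  rw [Polynomial.natDegree_le_iff_degree_le]
  exact (Polynomial.degree_sub_le _ _).trans
    (max_le (Polynomial.degree_C_mul_X_pow_le _ _) (degree_sum_C_mul_X_pow_lt s _).le)

lemma natDegree_recPoly (s : ℕ) (h : ℕ → A) (hdet : (hankelSq s h).det ≠ 0) :
    (recPoly s h).natDegree = s + 1 := by
  refine Polynomial.natDegree_eq_of_degree_eq_some ?_
  have hlead := Polynomial.degree_C_mul_X_pow (s + 1) hdet
  rw [recPoly, Polynomial.degree_sub_eq_left_of_degree_lt, hlead]
  rw [hlead]
  exact degree_sum_C_mul_X_pow_lt s _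

end HankelRecurrence

lemma separable_recPoly {K : Type*} [Field K] (s : ℕ) (h : ℕ → K) (hP : hankelGeneric s h ≠ 0) :
    (recPoly s h).Separable := by
  have hres := right_ne_zero_of_mul hP
  obtain ⟨p, q, -, -, hpq⟩ := Polynomial.exists_mul_add_mul_eq_C_resultant (m := s + 1) (n := s)
    (recPoly s h) (Polynomial.derivative (recPoly s h)) (natDegree_recPoly_le s h)
    ((Polynomial.natDegree_derivative_le _).trans
      (Nat.sub_le_sub_right (natDegree_recPoly_le s h) 1)) (Or.inl s.succ_ne_zero)
  set ρ := Polynomial.resultant (recPoly s h) (Polynomial.derivative (recPoly s h)) (s + 1) s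
  refine ⟨Polynomial.C ρ⁻¹ * p, Polynomial.C ρ⁻¹ * q, ?_⟩
  calc _ = Polynomial.C ρ⁻¹ *
        (recPoly s h * p + Polynomial.derivative (recPoly s h) * q) := by ring
    _ = 1 := by rw [hpq, ← map_mul, inv_mul_cancel₀ hres, map_one]

lemma exists_injective_roots_recPoly {K : Type*} [Field K] [IsAlgClosed K] (s : ℕ) (h : ℕ → K)
    (hP : hankelGeneric s h ≠ 0) :
    ∃ x : Fin (s + 1) → K, Function.Injective x ∧ ∀ k, (recPoly s h).IsRoot (x k) := by
  classical
  have hdeg := natDegree_recPoly s h (left_ne_zero_of_mul hP)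
  have hcard : (recPoly s h).roots.toFinset.card = s + 1 := by
    rw [Multiset.toFinset_card_of_nodup (Polynomial.nodup_roots (separable_recPoly s h hP)),
      IsAlgClosed.card_roots_eq_natDegree, hdeg]
  let e := ((recPoly s h).roots.toFinset.equivFinOfCardEq hcard).symm
  refine ⟨fun k => e k, Subtype.val_injective.comp e.injective, fun k => ?_⟩
  exact Polynomial.isRoot_of_mem_roots (Multiset.mem_toFinset.mp (e k).2)

/-- Sylvester's theorem: a generic sequence agrees up to index `2 * s + 1` with a sum of `s + 1`
geometric sequences. -/
lemma exists_eq_sum_mul_pow {K : Type*} [Field K] [IsAlgClosed K] (s : ℕ) (h : ℕ → K)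
    (hP : hankelGeneric s h ≠ 0) :
    ∃ c x : Fin (s + 1) → K, ∀ j ≤ 2 * s + 1, h j = ∑ k, c k * x k ^ j := by
  have hdet := left_ne_zero_of_mul hP
  obtain ⟨x, hx, hroot⟩ := exists_injective_roots_recPoly s h hP
  have hunit : IsUnit (Matrix.vandermonde x) :=
    (Matrix.isUnit_iff_isUnit_det _).mpr (Matrix.det_vandermonde_ne_zero_iff.mpr hx).isUnit
  obtain ⟨c, hc⟩ := (Matrix.vecMul_surjective_iff_isUnit.mpr hunit) fun i => h i
  have hrec (k : Fin (s + 1)) : (hankelSq s h).det * x k ^ (s + 1) =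
      ∑ j : Fin (s + 1), recCoeff s h j * x k ^ (j : ℕ) := by
    have := hroot k
    simpa [recPoly, Polynomial.IsRoot, Polynomial.eval_finsetSum, sub_eq_zero] using this
  refine ⟨c, x, fun j => ?_⟩
  induction j using Nat.strong_induction_on with
  | _ j ih =>
    intro hj
    rcases Nat.lt_or_ge j (s + 1) with hlt | hge
    · exact (congrFun hc ⟨j, hlt⟩).symm
    · obtain ⟨i, rfl⟩ := Nat.exists_eq_add_of_le' hge
      apply mul_left_cancel₀ hdet
      rw [← sum_mul_recCoeff s h (by omega), Finset.mul_sum]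
      calc ∑ j : Fin (s + 1), h (i + j) * recCoeff s h j
          = ∑ j : Fin (s + 1), (∑ k, c k * x k ^ (i + j : ℕ)) * recCoeff s h j := by
            refine Finset.sum_congr rfl fun j _ => ?_
            rw [ih (i + j) (by omega) (by omega)]
        _ = ∑ k, ∑ j : Fin (s + 1), (c k * x k ^ (i + j : ℕ)) * recCoeff s h j := by
            simp_rw [Finset.sum_mul]
            exact Finset.sum_comm
        _ = ∑ k, (hankelSq s h).det * (c k * x k ^ (i + (s + 1))) := by
            refine Finset.sum_congr rfl fun k _ => ?_
            rw [show (hankelSq s h).det * (c k * x k ^ (i + (s + 1))) =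
              c k * x k ^ i * ((hankelSq s h).det * x k ^ (s + 1)) by ring, hrec, Finset.mul_sum]
            exact Finset.sum_congr rfl fun j _ => by ring

section Witness

/-- The sequence of power sums, divided by `s + 1`, of the `(s + 1)`-th roots of unity, up to
index `2 * s + 1`. -/
def unityMoments (K : Type*) [Field K] (s : ℕ) (j : ℕ) : K :=
  if j = 0 ∨ j = s + 1 then 1 else 0

variable {K : Type*} [Field K] (s : ℕ)

lemma det_hankelSq_unityMoments_ne_zero : (hankelSq s (unityMoments K s)).det ≠ 0 := by
  intro hdet
  obtain ⟨v, hv, hMv⟩ := Matrix.exists_mulVec_eq_zero_iff.mpr hdet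
  refine hv (funext fun j => ?_)
  let i : Fin (s + 1) := if hj : (j : ℕ) = 0 then 0 else ⟨s + 1 - j, by omega⟩
  have hi : (i : ℕ) = if (j : ℕ) = 0 then 0 else s + 1 - j := by
    by_cases hj : (j : ℕ) = 0 <;> simp [i, hj]
  have hrow := congrFun hMv i
  rw [Matrix.mulVec, dotProduct, Finset.sum_eq_single j] at hrow
  · have hone : unityMoments K s (i + j) = 1 := by
      rw [unityMoments, if_pos]
      split_ifs at hi <;> omega
    simpa [hankelSq, hone] using hrow
  · intro l _ hl
    have hzero : unityMoments K s (i + l) = 0 := by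
      rw [unityMoments, if_neg]
      have := Fin.val_ne_of_ne hl
      split_ifs at hi <;> omega
    simp [hankelSq, hzero]
  · simp

lemma recPoly_unityMoments : recPoly s (unityMoments K s) =
    Polynomial.C (hankelSq s (unityMoments K s)).det * (Polynomial.X ^ (s + 1) - 1) := by
  have hb : (fun i : Fin (s + 1) => unityMoments K s (i + (s + 1))) = Pi.single 0 1 := by
    funext i
    by_cases hi : i = 0
    · simp [hi, unityMoments]
    · simp [unityMoments, hi]
  have hMb : Matrix.mulVec (hankelSq s (unityMoments K s)) (Pi.single 0 1) = Pi.single 0 1 := by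
    funext i
    rw [Matrix.mulVec_single_one]
    by_cases hi : i = 0
    · simp [hi, unityMoments, hankelSq]
    · have := i.isLt
      simp [unityMoments, hankelSq, hi, this.ne]
  have hg : recCoeff s (unityMoments K s) =
      (hankelSq s (unityMoments K s)).det • (Pi.single 0 1 : Fin (s + 1) → K) := by
    rw [recCoeff, hb]
    nth_rewrite 1 [← hMb]
    rw [Matrix.mulVec_mulVec, Matrix.adjugate_mul, Matrix.smul_mulVec, Matrix.one_mulVec]
  rw [recPoly, hg, Finset.sum_eq_single 0]
  · simp [mul_sub]
  · intro j _ hj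
    simp [hj]
  · simp

lemma hankelGeneric_unityMoments_ne_zero [CharZero K] :
    hankelGeneric s (unityMoments K s) ≠ 0 := by
  have hdet := det_hankelSq_unityMoments_ne_zero (K := K) s
  refine mul_ne_zero hdet ?_
  have hdeg := natDegree_recPoly s _ hdet
  have hsep : (recPoly s (unityMoments K s)).Separable := by
    rw [recPoly_unityMoments]
    refine ((Polynomial.separable_X_pow_sub_C (1 : K) ?_ one_ne_zero)).unit_mul
      (Polynomial.isUnit_C.mpr hdet.isUnit)
    exact_mod_cast s.succ_ne_zero
  have := Polynomial.resultant_ne_zero _ _ hsep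
  rwa [Polynomial.natDegree_derivative, hdeg] at this

end Witness

/-- The extension by zero of a finite sequence. -/
def extendZero {A : Type*} [Zero A] {N : ℕ} (h : Fin N → A) (j : ℕ) : A :=
  if hj : j < N then h ⟨j, hj⟩ else 0

lemma extendZero_of_lt {A : Type*} [Zero A] {N : ℕ} (h : Fin N → A) {j : ℕ} (hj : j < N) :
    extendZero h j = h ⟨j, hj⟩ := dif_pos hj

/-- The polynomial in the parameters of a Hankel tensor whose nonvanishing makes the tensor
generic. -/
def genericPoly (N s : ℕ) : MvPolynomial (Fin N) ℂ :=
  hankelGeneric s (extendZero fun i => X i)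

lemma eval_genericPoly {N : ℕ} (s : ℕ) (h : Fin N → ℂ) :
    MvPolynomial.eval h (genericPoly N s) = hankelGeneric s (extendZero h) := by
  rw [genericPoly, hankelGeneric_map]
  congr 1
  funext j
  by_cases hj : j < N <;> simp [extendZero, hj]

lemma genericPoly_ne_zero {N s : ℕ} (hN : s + 1 < N) : genericPoly N s ≠ 0 := by
  intro h0
  refine hankelGeneric_unityMoments_ne_zero (K := ℂ) s ?_
  have hext : extendZero (fun i : Fin N => unityMoments ℂ s i) = unityMoments ℂ s := by
    funext j
    by_cases hj : j < N
    · simp [extendZero, hj]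
    · rw [extendZero, dif_neg hj, unityMoments, if_neg (by omega)]
  rw [← hext, ← eval_genericPoly, h0, map_zero]

/-- Every number up to `(n - 1) * k` is the entry sum of a multi-index of length `k`. -/
lemma exists_multiIndex_sum_eq {n : ℕ} (hn : 0 < n) (k p : ℕ) (hp : p ≤ (n - 1) * k) :
    ∃ i : Fin k → Fin n, ∑ j, (i j : ℕ) = p := by
  induction k generalizing p with
  | zero => exact ⟨Fin.elim0, by simpa [eq_comm] using hp⟩
  | succ k ih =>
    rw [Nat.mul_succ] at hp
    obtain ⟨i, hi⟩ := ih (p - min p (n - 1)) (by omega)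
    refine ⟨Fin.cons ⟨min p (n - 1), by omega⟩ i, ?_⟩
    rw [Fin.sum_univ_succ]
    simp only [Fin.cons_zero, Fin.cons_succ, hi]
    omega

lemma IsHankel.apply_eq {m n : ℕ} {H : Tensor m n} {h : Fin ((n - 1) * m + 1) → ℂ}
    (hH : IsHankel H h) (i : Fin m → Fin n) : H i = extendZero h (∑ j, (i j : ℕ)) := by
  rw [hH i, extendZero_of_lt]

lemma symSet_subset_cpSet (m n r : ℕ) : symSet m n r ⊆ cpSet m n r :=
  fun _ ⟨v, hv⟩ => ⟨fun k _ => v k, hv⟩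

lemma vandSet_subset_symSet (m n r : ℕ) : vandSet m n r ⊆ symSet m n r :=
  fun _ ⟨ab, hab⟩ => ⟨fun k => vand n (ab k).1 (ab k).2, hab⟩

lemma prod_vand {m n : ℕ} (a x : ℂ) (i : Fin m → Fin n) :
    ∏ j, vand n a (a * x) (i j) = a ^ ((n - 1) * m) * x ^ ∑ j, (i j : ℕ) := by
  have hj (j : Fin m) : vand n a (a * x) (i j) = a ^ (n - 1) * x ^ (i j : ℕ) := by
    have hle : (i j : ℕ) ≤ n - 1 := Nat.le_pred_of_lt (i j).isLt
    rw [vand, mul_pow, ← mul_assoc, ← pow_add, Nat.sub_add_cancel hle]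
  simp only [hj, Finset.prod_mul_distrib, Finset.prod_pow_eq_pow_sum, Finset.sum_const,
    Finset.card_univ, Fintype.card_fin, smul_eq_mul, mul_comm m]

lemma mem_vandSet_of_hankelGeneric_ne_zero {m n s : ℕ} (hs : (n - 1) * m = 2 * s)
    (hpos : 0 < s) {H : Tensor m n} {h : Fin ((n - 1) * m + 1) → ℂ} (hH : IsHankel H h)
    (hP : hankelGeneric s (extendZero h) ≠ 0) : H ∈ vandSet m n (s + 1) := by
  obtain ⟨c, x, hcx⟩ := exists_eq_sum_mul_pow s (extendZero h) hP
  have hroot (k : Fin (s + 1)) : ∃ a : ℂ, a ^ ((n - 1) * m) = c k :=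
    IsAlgClosed.exists_pow_nat_eq _ (by omega)
  choose a ha using hroot
  refine ⟨fun k => (a k, a k * x k), fun i => ?_⟩
  have hle : ∑ j, (i j : ℕ) ≤ (n - 1) * m := by
    refine (Finset.sum_le_card_nsmul _ _ (n - 1) fun j _ => Nat.le_pred_of_lt (i j).isLt).trans ?_
    simp [mul_comm]
  rw [hH.apply_eq, hcx _ (by omega)]
  simp_rw [prod_vand, ha]

/-- The square submatrix with index rows and columns `α` of the balanced flattening of a tensor of
even order. -/
def flattening {n k : ℕ} {ι : Type*} (α : ι → Fin k → Fin n) (T : Tensor (k + k) n) :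
    Matrix ι ι ℂ :=
  Matrix.of fun p q => T (Fin.append (α p) (α q))

lemma det_flattening_eq_zero_of_mem_cpSet {n k N r : ℕ} (hr : r < N) (α : Fin N → Fin k → Fin n)
    {T : Tensor (k + k) n} (hT : T ∈ cpSet (k + k) n r) : (flattening α T).det = 0 := by
  obtain ⟨u, hu⟩ := hT
  have hmul : flattening α T =
      Matrix.of (fun (p : Fin N) (l : Fin r) => ∏ j, u l (Fin.castAdd k j) (α p j)) *
        Matrix.of (fun (l : Fin r) (q : Fin N) => ∏ j, u l (Fin.natAdd k j) (α q j)) := by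
    ext p q
    simp [flattening, Matrix.mul_apply, hu, Fin.prod_univ_add, -Fin.natAdd_eq_addNat]
  by_contra hdet
  have hrank := Matrix.rank_of_isUnit (flattening α T)
    ((Matrix.isUnit_iff_isUnit_det _).mpr (isUnit_iff_ne_zero.mpr hdet))
  rw [hmul] at hrank
  have hle := hrank.symm.le.trans ((Matrix.rank_mul_le_left _ _).trans (Matrix.rank_le_width _))
  rw [Fintype.card_fin] at hle
  omega

lemma det_flattening_eq_zero_of_mem_closure_cpSet {n k N r : ℕ} (hr : r < N)
    (α : Fin N → Fin k → Fin n) {T : Tensor (k + k) n} (hT : T ∈ closure (cpSet (k + k) n r)) :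
    (flattening α T).det = 0 := by
  have hclosed : IsClosed {T : Tensor (k + k) n | (flattening α T).det = 0} := by
    refine isClosed_eq (Continuous.matrix_det ?_) continuous_const
    exact continuous_matrix fun p q => continuous_apply _
  exact closure_minimal (fun _ => det_flattening_eq_zero_of_mem_cpSet hr α) hclosed hT

lemma le_of_mem_closure_cpSet {n k r : ℕ} (hn : 0 < n) {H : Tensor (k + k) n}
    {h : Fin ((n - 1) * (k + k) + 1) → ℂ} (hH : IsHankel H h)
    (hdet : (hankelSq ((n - 1) * k) (extendZero h)).det ≠ 0)
    (hr : H ∈ closure (cpSet (k + k) n r)) : (n - 1) * k + 1 ≤ r := by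
  by_contra! hlt
  choose α hα using fun p : Fin ((n - 1) * k + 1) =>
    exists_multiIndex_sum_eq hn k p (Nat.lt_succ_iff.mp p.isLt)
  refine hdet ?_
  rw [← det_flattening_eq_zero_of_mem_closure_cpSet hlt α hr]
  congr 1
  ext p q
  simp [hankelSq, flattening, hH.apply_eq, Fin.sum_univ_add, hα, -Fin.natAdd_eq_addNat]

lemma Nat.sInf_eq_of_mem_of_forall_le {S : Set ℕ} {a : ℕ} (ha : a ∈ S) (hle : ∀ b ∈ S, a ≤ b) :
    sInf S = a :=
  (show IsLeast S a from ⟨ha, hle⟩).csInf_eq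

/-- For a generic Hankel tensor of even order, all ranks equal
`1 + (n-1)m/2`. -/
theorem stmt_10 (n m : ℕ) (hn : 2 ≤ n) (hm : 2 ≤ m) (hme : Even m) :
    ∃ P : MvPolynomial (Fin ((n - 1) * m + 1)) ℂ, P ≠ 0 ∧
      ∀ (H : Tensor m n) (h : Fin ((n - 1) * m + 1) → ℂ), IsHankel H h →
        MvPolynomial.eval h P ≠ 0 →
        cpRank H = 1 + (n - 1) * m / 2 ∧ symRank H = 1 + (n - 1) * m / 2 ∧
        brank H = 1 + (n - 1) * m / 2 ∧ bSymRank H = 1 + (n - 1) * m / 2 ∧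
        vandRank H = 1 + (n - 1) * m / 2 := by
  obtain ⟨k, rfl⟩ := hme
  have hs : (n - 1) * (k + k) = 2 * ((n - 1) * k) := by ring
  have hpos : 0 < (n - 1) * k := Nat.mul_pos (by omega) (by omega)
  refine ⟨genericPoly _ ((n - 1) * k), genericPoly_ne_zero (by omega), fun H h hH hP => ?_⟩
  rw [eval_genericPoly] at hP
  have hval : 1 + (n - 1) * (k + k) / 2 = (n - 1) * k + 1 := by omega
  have hvand := mem_vandSet_of_hankelGeneric_ne_zero hs hpos hH hP
  have hsym := vandSet_subset_symSet _ _ _ hvand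
  have hcp := symSet_subset_cpSet _ _ _ hsym
  have hle (r : ℕ) (hr : H ∈ closure (cpSet (k + k) n r)) : (n - 1) * k + 1 ≤ r :=
    le_of_mem_closure_cpSet (by omega) hH (left_ne_zero_of_mul hP) hr
  rw [hval]
  refine ⟨Nat.sInf_eq_of_mem_of_forall_le hcp fun r hr => hle r (subset_closure hr),
    Nat.sInf_eq_of_mem_of_forall_le hsym fun r hr =>
      hle r (subset_closure (symSet_subset_cpSet _ _ _ hr)),
    Nat.sInf_eq_of_mem_of_forall_le (subset_closure hcp) hle,
    Nat.sInf_eq_of_mem_of_forall_le (subset_closure hsym) fun r hr =>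
      hle r (closure_mono (symSet_subset_cpSet _ _ _) hr),
    Nat.sInf_eq_of_mem_of_forall_le hvand fun r hr =>
      hle r (subset_closure (symSet_subset_cpSet _ _ _ (vandSet_subset_symSet _ _ _ hr)))⟩
end
end

section
/- Let n ≥ 2. There exists a nonzero polynomial P in 3(n−1)+1 complex variables such that for every Hankel tensor H of order 3 and dimension n whose parameter vector h satisfies P(h) ≠ 0, the border rank of H satisfies brank(H) ≥ ⌊(3n−1)/2⌋. -/
open scoped BigOperators
open MvPolynomial

noncomputable section

/-- Contracting the columns of a determinant against vectors `w j`. -/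
lemma sum_prod_mul_det {n : ℕ} (w : Fin 3 → Fin n → ℂ) (v : Fin 3 → Fin 3 → Fin n → ℂ) :
    ∑ x : Fin 3 → Fin n, (∏ j, w j (x j)) * (Matrix.of fun a j => v j a (x j)).det =
      (Matrix.of fun a j => w j ⬝ᵥ v j a).det := by
  simp only [Matrix.det_apply', Matrix.of_apply, dotProduct, Finset.mul_sum]
  rw [Finset.sum_comm]
  refine Finset.sum_congr rfl fun σ _ => ?_
  rw [Finset.prod_univ_sum, Fintype.piFinset_univ, Finset.mul_sum]
  refine Finset.sum_congr rfl fun x _ => ?_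
  rw [Finset.prod_mul_distrib]
  ring

/-- The coefficients of the Koszul pairing of two triples `u`, `u'` of vectors, relative to the
triple `p` contracted with the first mode. -/
def koszulWeight {n : ℕ} (p u u' : Fin 3 → Fin n → ℂ) (x : Fin 3 → Fin n) : ℂ :=
  (Matrix.of fun a j => (![p, u, u'] : Fin 3 → Fin 3 → Fin n → ℂ) j a (x j)).det

/-- The Koszul flattening of `T`, compressed to the triples `u i`. -/
def koszulGram {n : ℕ} {ι : Type*} (p : Fin 3 → Fin n → ℂ) (u : ι → Fin 3 → Fin n → ℂ)
    (T : Tensor 3 n) : Matrix ι ι ℂ :=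
  Matrix.of fun i j => ∑ x, T x * koszulWeight p (u i) (u j) x

/-- The skew-symmetric matrix of the cross product with `v`. -/
def crossMatrix (v : Fin 3 → ℂ) : Matrix (Fin 3) (Fin 3) ℂ :=
  !![0, v 2, -v 1; -v 2, 0, v 0; v 1, -v 0, 0]

lemma rank_crossMatrix_le (v : Fin 3 → ℂ) : (crossMatrix v).rank ≤ 2 := by
  by_contra! h
  have h3 : (crossMatrix v).rank = 3 :=
    le_antisymm (by simpa using (crossMatrix v).rank_le_card_width) h
  have hu : IsUnit (crossMatrix v) := by
    refine Matrix.mulVec_surjective_iff_isUnit.1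
      ((LinearMap.range_eq_top (f := (crossMatrix v).mulVecLin)).1
        (Submodule.eq_top_of_finrank_eq ?_))
    rw [← Matrix.rank, h3]
    simp
  rw [Matrix.isUnit_iff_isUnit_det, isUnit_iff_ne_zero] at hu
  apply hu
  rw [crossMatrix, Matrix.det_fin_three]
  simp
  ring

lemma koszulGram_apply_of_eq_sum {n r : ℕ} {ι : Type*} (p : Fin 3 → Fin n → ℂ)
    (u : ι → Fin 3 → Fin n → ℂ) {T : Tensor 3 n} {w : Fin r → Fin 3 → Fin n → ℂ}
    (hw : ∀ x, T x = ∑ k, ∏ j, w k j (x j)) (i j : ι) :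
    koszulGram p u T i j =
      ∑ k, (Matrix.of fun a l => w k l ⬝ᵥ
        (![p, u i, u j] : Fin 3 → Fin 3 → Fin n → ℂ) l a).det := by
  simp only [koszulGram, koszulWeight, Matrix.of_apply, hw, Finset.sum_mul]
  rw [Finset.sum_comm]
  exact Finset.sum_congr rfl fun k _ => sum_prod_mul_det _ _

lemma rank_add_le_add {ι : Type*} [Fintype ι] (A B : Matrix ι ι ℂ) :
    (A + B).rank ≤ A.rank + B.rank := by
  rw [Matrix.rank, Matrix.mulVecLin_add]
  exact (Submodule.finrank_mono (LinearMap.range_add_le _ _)).trans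
    (Submodule.finrank_add_le_finrank_add_finrank _ _)

lemma rank_sum_le_card_mul {ι κ : Type*} [Fintype ι] (s : Finset κ) (f : κ → Matrix ι ι ℂ)
    (b : ℕ) (hf : ∀ k, (f k).rank ≤ b) : (∑ k ∈ s, f k).rank ≤ s.card * b := by
  classical
  induction s using Finset.induction_on with
  | empty => simp
  | insert k s hk ih =>
    rw [Finset.sum_insert hk, Finset.card_insert_of_notMem hk]
    have := rank_add_le_add (f k) (∑ k ∈ s, f k)
    have := hf k
    linarith

lemma rank_koszulGram_le {n r : ℕ} {ι : Type*} [Fintype ι] (p : Fin 3 → Fin n → ℂ)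
    (u : ι → Fin 3 → Fin n → ℂ) {T : Tensor 3 n} (hT : T ∈ cpSet 3 n r) :
    (koszulGram p u T).rank ≤ r * 2 := by
  obtain ⟨w, hw⟩ := hT
  have h : koszulGram p u T = ∑ k : Fin r,
      (Matrix.of fun i a => w k 1 ⬝ᵥ u i a) * crossMatrix (fun a => w k 0 ⬝ᵥ p a) *
        (Matrix.of fun a j => w k 2 ⬝ᵥ u j a) := by
    ext i j
    rw [koszulGram_apply_of_eq_sum p u hw, Matrix.sum_apply]
    refine Finset.sum_congr rfl fun k _ => ?_
    rw [Matrix.det_fin_three]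
    simp [Matrix.mul_apply, Fin.sum_univ_three, crossMatrix]
    ring
  rw [h]
  simpa using rank_sum_le_card_mul Finset.univ (fun k : Fin r =>
      (Matrix.of fun i a => w k 1 ⬝ᵥ u i a) * crossMatrix (fun a => w k 0 ⬝ᵥ p a) *
        (Matrix.of fun a j => w k 2 ⬝ᵥ u j a)) 2 fun k =>
    (Matrix.rank_mul_le_left _ _).trans
      ((Matrix.rank_mul_le_right _ _).trans (rank_crossMatrix_le _))

lemma det_koszulGram_eq_zero {n r : ℕ} {ι : Type*} [Fintype ι] [DecidableEq ι]
    (p : Fin 3 → Fin n → ℂ) (u : ι → Fin 3 → Fin n → ℂ) (hr : r * 2 < Fintype.card ι)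
    {T : Tensor 3 n} (hT : T ∈ closure (cpSet 3 n r)) : (koszulGram p u T).det = 0 := by
  have hc : Continuous fun T : Tensor 3 n => (koszulGram p u T).det := by
    refine Continuous.matrix_det (continuous_matrix fun i j => ?_)
    simp only [koszulGram, Matrix.of_apply]
    fun_prop
  refine closure_minimal (t := {T | (koszulGram p u T).det = 0}) (fun S hS => ?_)
    (isClosed_singleton.preimage hc) hT
  by_contra h
  have := Matrix.rank_of_isUnit _
    ((Matrix.isUnit_iff_isUnit_det _).2 (isUnit_iff_ne_zero.2 h))
  have := rank_koszulGram_le p u hS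
  omega

lemma mem_cpSet_card {n : ℕ} (T : Tensor 3 n) :
    T ∈ cpSet 3 n (Fintype.card (Fin 3 → Fin n)) := by
  let e := Fintype.equivFin (Fin 3 → Fin n)
  refine ⟨fun k j y => if y = e.symm k j then (if j = 0 then T (e.symm k) else 1) else 0,
    fun i => ?_⟩
  rw [Equiv.sum_comp e.symm
    (fun x => ∏ j, if i j = x j then (if j = 0 then T x else 1) else 0)]
  simp [Finset.prod_ite_zero, ← funext_iff]

lemma mem_closure_cpSet_brank {n : ℕ} (T : Tensor 3 n) :
    T ∈ closure (cpSet 3 n (brank T)) :=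
  Nat.sInf_mem (s := {r | T ∈ closure (cpSet 3 n r)}) ⟨_, subset_closure (mem_cpSet_card T)⟩

/-- The residue class of `t` modulo three. -/
def color (t : ℕ) : Fin 3 := Fin.ofNat 3 t

/-- The nodes `t ≤ m` which are not of color `c`, together with `m`. -/
def nodes (m : ℕ) (c : Fin 3) : Finset ℕ := {t ∈ Finset.range (m + 1) | t = m ∨ color t ≠ c}

/-- The polynomial with simple roots at the nodes other than `t`. -/
def nodePoly (m : ℕ) (c : Fin 3) (t : ℕ) : Polynomial ℂ :=
  ∏ x ∈ (nodes m c).erase t, (Polynomial.X - Polynomial.C (x : ℂ))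

lemma card_filter_color_ne (m : ℕ) (c : Fin 3) :
    ((Finset.range m).filter fun t => color t ≠ c).card = m - (m + 2 - c) / 3 := by
  induction m with
  | zero => simp
  | succ m ih =>
    have hc := c.isLt
    rw [Finset.range_add_one, Finset.filter_insert]
    have : color m = c ↔ m % 3 = c := by simp [color, Fin.ext_iff]
    split_ifs with h
    · rw [Finset.card_insert_of_notMem (by simp), ih]
      rw [ne_eq, this] at h
      omega
    · rw [ih]
      rw [not_not, this] at h
      omega

lemma card_nodes_le {n : ℕ} (hn : 2 ≤ n) (c : Fin 3) :
    (nodes ((3 * n - 1) / 2 - 1) c).card ≤ n := by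
  set m := (3 * n - 1) / 2 - 1 with hm
  have h : nodes m c ⊆ insert m ((Finset.range m).filter fun t => color t ≠ c) := by
    intro t
    simp only [nodes, Finset.mem_filter, Finset.mem_range, Finset.mem_insert]
    rintro ⟨h1, h2⟩
    rcases eq_or_ne t m with h3 | h3
    · exact Or.inl h3
    · exact Or.inr ⟨by omega, h2.resolve_left h3⟩
  have h1 := (Finset.card_le_card h).trans (Finset.card_insert_le _ _)
  rw [card_filter_color_ne] at h1
  have := c.isLt
  omega

lemma natDegree_nodePoly_lt {m n t : ℕ} {c : Fin 3} (h : (nodes m c).card ≤ n)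
    (ht : t ∈ nodes m c) : (nodePoly m c t).natDegree < n := by
  rw [nodePoly, Polynomial.natDegree_finsetProd_X_sub_C_eq_card]
  exact (Finset.card_erase_lt_of_mem ht).trans_le h

lemma eval_nodePoly_eq_zero_iff {m t x : ℕ} {c : Fin 3} :
    (nodePoly m c t).eval (x : ℂ) = 0 ↔ x ≠ t ∧ x ∈ nodes m c := by
  simp [nodePoly, Polynomial.eval_prod, Finset.prod_eq_zero_iff, sub_eq_zero]

lemma pow_dotProduct_coeff {n : ℕ} {q : Polynomial ℂ} (hq : q.natDegree < n) (t : ℂ) :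
    (fun i : Fin n => t ^ (i : ℕ)) ⬝ᵥ (fun i : Fin n => q.coeff i) = q.eval t := by
  rw [Polynomial.eval_eq_sum_range' hq, dotProduct,
    Fin.sum_univ_eq_sum_range (fun i => t ^ i * q.coeff i)]
  exact Finset.sum_congr rfl fun _ _ => mul_comm _ _

/-- The two colors different from that of `t`. -/
def otherColor (t : ℕ) (s : Fin 2) : Fin 3 := color t + 1 + s.castSucc

lemma otherColor_ne (t : ℕ) (s : Fin 2) : color t ≠ otherColor t s := by
  unfold otherColor
  generalize color t = c
  revert c s
  decide

/-- The triple of polynomials contracted with the first mode. -/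
def slicePoly (m : ℕ) (c : Fin 3) : Polynomial ℂ := nodePoly m c m

/-- Triples of polynomials dual to the nodes. -/
def dualPoly (m : ℕ) (i : Fin 2 × Fin (m + 1)) (c : Fin 3) : Polynomial ℂ :=
  if c = otherColor i.2 i.1 then nodePoly m c i.2 else 0

lemma mem_nodes_self (m : ℕ) (c : Fin 3) : m ∈ nodes m c := by simp [nodes]

lemma mem_nodes_otherColor {m : ℕ} (t : Fin (m + 1)) (s : Fin 2) :
    (t : ℕ) ∈ nodes m (otherColor t s) := by
  simp [nodes, otherColor_ne, t.isLt]

/-- Away from its own node a dual triple is proportional to the slice triple. -/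
lemma exists_dualPoly_eval_eq_smul {m : ℕ} (i : Fin 2 × Fin (m + 1)) {x : Fin (m + 1)}
    (hx : x ≠ i.2) : ∃ z : ℂ, ∀ c,
      (dualPoly m i c).eval ((x : ℕ) : ℂ) = z * (slicePoly m c).eval ((x : ℕ) : ℂ) := by
  have hx' : (x : ℕ) ≠ i.2 := fun h => hx (Fin.ext h)
  by_cases hmem : (x : ℕ) ∈ nodes m (otherColor i.2 i.1)
  · refine ⟨0, fun c => ?_⟩
    rw [dualPoly]
    split_ifs with h
    · subst h
      rw [eval_nodePoly_eq_zero_iff.2 ⟨hx', hmem⟩, zero_mul]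
    · simp
  · have hne : (slicePoly m (otherColor i.2 i.1)).eval ((x : ℕ) : ℂ) ≠ 0 := fun h =>
      hmem (eval_nodePoly_eq_zero_iff.1 h).2
    obtain ⟨hxm, hcol⟩ : (x : ℕ) ≠ m ∧ color x = otherColor i.2 i.1 := by
      simpa [nodes, x.isLt] using hmem
    refine ⟨(nodePoly m (otherColor i.2 i.1) i.2).eval ((x : ℕ) : ℂ) /
      (slicePoly m (otherColor i.2 i.1)).eval ((x : ℕ) : ℂ), fun c => ?_⟩
    rw [dualPoly]
    split_ifs with h
    · subst h
      field_simp
    · have : (slicePoly m c).eval ((x : ℕ) : ℂ) = 0 :=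
        eval_nodePoly_eq_zero_iff.2 ⟨hxm, by
          simp only [nodes, Finset.mem_filter, Finset.mem_range]
          exact ⟨x.isLt, Or.inr (by rw [hcol]; exact Ne.symm h)⟩⟩
      simp [this]

/-- The Koszul pairing of the dual triples `i`, `j` at the node `x`. -/
def nodePairing (m : ℕ) (i j : Fin 2 × Fin (m + 1)) (x : Fin (m + 1)) : ℂ :=
  (Matrix.of fun a l => ((![slicePoly m, dualPoly m i, dualPoly m j] :
    Fin 3 → Fin 3 → Polynomial ℂ) l a).eval ((x : ℕ) : ℂ)).det

lemma nodePairing_eq_zero {m : ℕ} {i j : Fin 2 × Fin (m + 1)} {x : Fin (m + 1)}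
    (h : x ≠ i.2 ∨ x ≠ j.2) : nodePairing m i j x = 0 := by
  rcases h with h | h <;>
  · obtain ⟨z, hz⟩ := exists_dualPoly_eval_eq_smul _ h
    rw [nodePairing, Matrix.det_fin_three]
    simp [hz]
    ring

lemma det_nodePairing_ne_zero {m : ℕ} (x : Fin (m + 1)) :
    (Matrix.of fun s s' : Fin 2 => nodePairing m (s, x) (s', x) x).det ≠ 0 := by
  have hp : (slicePoly m (color x)).eval ((x : ℕ) : ℂ) ≠ 0 := by
    rw [slicePoly, ne_eq, eval_nodePoly_eq_zero_iff]
    simp +contextual [nodes]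
  have hq (c : Fin 3) : (nodePoly m c x).eval ((x : ℕ) : ℂ) ≠ 0 := by
    simp [eval_nodePoly_eq_zero_iff]
  rw [Matrix.det_fin_two]
  obtain ⟨c, hc⟩ : ∃ c, color x = c := ⟨_, rfl⟩
  rw [hc] at hp
  fin_cases c <;>
    simp_all [nodePairing, Matrix.det_fin_three, dualPoly, otherColor]

/-- The parameter vector of a sum of Vandermonde tensors at the nodes. -/
def nodeMoments (d m : ℕ) (k : Fin d) : ℂ := ∑ x : Fin (m + 1), ((x : ℕ) : ℂ) ^ (k : ℕ)

lemma det_koszulGram_nodeMoments_ne_zero {n m : ℕ} (hm : ∀ c, (nodes m c).card ≤ n)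
    {T : Tensor 3 n} (hT : IsHankel T (nodeMoments _ m)) :
    (koszulGram (fun c (y : Fin n) => (slicePoly m c).coeff y)
      (fun i c (y : Fin n) => (dualPoly m i c).coeff y) T).det ≠ 0 := by
  have hw : ∀ x, T x = ∑ k : Fin (m + 1), ∏ j, ((k : ℕ) : ℂ) ^ (x j : ℕ) := fun x => by
    rw [hT x]
    simp only [nodeMoments, Finset.prod_pow_eq_pow_sum]
  have hslice (c) : (slicePoly m c).natDegree < n :=
    natDegree_nodePoly_lt (hm c) (mem_nodes_self m c)
  have hdual (i c) : (dualPoly m i c).natDegree < n := by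
    rw [dualPoly]
    split_ifs with h
    · subst h
      exact natDegree_nodePoly_lt (hm _) (mem_nodes_otherColor _ _)
    · have := hslice 0
      simp; omega
  have hG : koszulGram (fun c (y : Fin n) => (slicePoly m c).coeff y)
      (fun i c (y : Fin n) => (dualPoly m i c).coeff y) T =
      Matrix.blockDiagonal fun x => Matrix.of fun s s' : Fin 2 =>
        nodePairing m (s, x) (s', x) x := by
    ext i j
    have hij : koszulGram (fun c (y : Fin n) => (slicePoly m c).coeff y)
        (fun i c (y : Fin n) => (dualPoly m i c).coeff y) T i j =
        ∑ x, nodePairing m i j x := by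
      rw [koszulGram_apply_of_eq_sum (r := m + 1) _ _
        (w := fun k _ y => ((k : ℕ) : ℂ) ^ (y : ℕ)) hw]
      refine Finset.sum_congr rfl fun k _ => ?_
      rw [nodePairing]
      congr 2
      ext a l
      fin_cases l
      · exact pow_dotProduct_coeff (hslice a) _
      · exact pow_dotProduct_coeff (hdual i a) _
      · exact pow_dotProduct_coeff (hdual j a) _
    rw [hij, Finset.sum_eq_single_of_mem i.2 (Finset.mem_univ _)
      fun x _ hx => nodePairing_eq_zero (Or.inl hx), Matrix.blockDiagonal_apply]
    split_ifs with h
    · obtain ⟨s, x⟩ := i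
      obtain ⟨s', x'⟩ := j
      subst h
      rfl
    · exact nodePairing_eq_zero (Or.inr h)
  rw [hG, Matrix.det_blockDiagonal]
  exact Finset.prod_ne_zero_iff.2 fun x _ => det_nodePairing_ne_zero x

/-- The position in the parameter vector of the entry of a Hankel tensor at `x`. -/
def hankelIndex {n : ℕ} (x : Fin 3 → Fin n) : Fin ((n - 1) * 3 + 1) :=
  ⟨∑ j, (x j : ℕ), by
    have h₀ := (x 0).isLt
    have h₁ := (x 1).isLt
    have h₂ := (x 2).isLt
    rw [Fin.sum_univ_three]
    omega⟩

/-- The determinant of the compressed Koszul flattening of the generic Hankel tensor. -/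
def koszulPoly {n : ℕ} {ι : Type*} [Fintype ι] [DecidableEq ι] (p : Fin 3 → Fin n → ℂ)
    (u : ι → Fin 3 → Fin n → ℂ) : MvPolynomial (Fin ((n - 1) * 3 + 1)) ℂ :=
  (Matrix.of fun i j => ∑ x, X (hankelIndex x) * C (koszulWeight p (u i) (u j) x)).det

lemma eval_koszulPoly {n : ℕ} {ι : Type*} [Fintype ι] [DecidableEq ι] (p : Fin 3 → Fin n → ℂ)
    (u : ι → Fin 3 → Fin n → ℂ) {T : Tensor 3 n} {h : Fin ((n - 1) * 3 + 1) → ℂ}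
    (hT : IsHankel T h) : MvPolynomial.eval h (koszulPoly p u) = (koszulGram p u T).det := by
  rw [koszulPoly, RingHom.map_det]
  congr 1
  ext i j
  simp [koszulGram, hT _, hankelIndex]

/-- A generic Hankel tensor of order 3 and dimension `n` has border
rank at least `⌊(3n-1)/2⌋`. -/
theorem stmt_14 (n : ℕ) (hn : 2 ≤ n) :
    ∃ P : MvPolynomial (Fin ((n - 1) * 3 + 1)) ℂ, P ≠ 0 ∧
      ∀ (H : Tensor 3 n) (h : Fin ((n - 1) * 3 + 1) → ℂ), IsHankel H h →
        MvPolynomial.eval h P ≠ 0 → (3 * n - 1) / 2 ≤ brank H := by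
  set m := (3 * n - 1) / 2 - 1 with hm
  refine ⟨koszulPoly (fun c (y : Fin n) => (slicePoly m c).coeff y)
    (fun i c (y : Fin n) => (dualPoly m i c).coeff y), fun h0 => ?_, fun H h hH hP => ?_⟩
  · have hT : IsHankel (fun x : Fin 3 → Fin n => nodeMoments _ m (hankelIndex x))
      (nodeMoments _ m) := fun _ => rfl
    apply det_koszulGram_nodeMoments_ne_zero (card_nodes_le hn) hT
    rw [← eval_koszulPoly _ _ hT, h0, map_zero]
  · by_contra! hlt
    rw [eval_koszulPoly _ _ hH] at hP
    refine hP (det_koszulGram_eq_zero _ _ ?_ (mem_closure_cpSet_brank H))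
    simp
    omega
end
end
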